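/- Let A, B, C ∈ ℂ and let α, β ∈ ℂ with α ≠ 0, α ≠ 1, β ≠ 0, β ≠ 1 and α ≠ β. If (α−β)A + α²(β−1)B + β²(α−1)C = 0, A + 2α(β−1)B + β²C = 0, and −A + α²B + 2β(α−1)C = 0, then A = B = C = 0. -/

import Mathlib

theorem stmt0 (A B C α β : ℂ)
    (hα0 : α ≠ 0) (hα1 : α ≠ 1) (hβ0 : β ≠ 0) (hβ1 : β ≠ 1) (hαβ : α ≠ β)
    (h1 : (α - β) * A + α ^ 2 * (β - 1) * B + β ^ 2 * (α - 1) * C = 0)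
    (h2 : A + 2 * α * (β - 1) * B + β ^ 2 * C = 0)
    (h3 : -A + α ^ 2 * B + 2 * β * (α - 1) * C = 0) :
    A = 0 ∧ B = 0 ∧ C = 0 := by 
  -- The determinant of the coefficient matrix.
  have hD : 2 * α * β * (α - 1) * (β - 1) * (α - β) ≠ 0 := by
    simp [hα0, hβ0, sub_ne_zero, hα1, hβ1, hαβ]
  -- Cramer's rule: the multipliers of the equations are the cofactors of the unknown's column.
  refine ⟨mul_left_cancel₀ hD ?_, mul_left_cancel₀ hD ?_, mul_left_cancel₀ hD ?_⟩
  · linear_combination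
      (4 * α * β * (α - 1) * (β - 1) - α ^ 2 * β ^ 2) * h1
      - α ^ 2 * β * (α - 1) * (β - 2) * h2 + α * β ^ 2 * (β - 1) * (2 - α) * h3
  · linear_combination
      -(2 * β * (α - 1) + β ^ 2) * h1
      + ((α - β) * (2 * β * (α - 1)) + β ^ 2 * (α - 1)) * h2
      - ((α - β) * β ^ 2 - β ^ 2 * (α - 1)) * h3
  · linear_combination
      (α ^ 2 + 2 * α * (β - 1)) * h1
      - ((α - β) * α ^ 2 + α ^ 2 * (β - 1)) * h2
      + ((α - β) * (2 * α * (β - 1)) - α ^ 2 * (β - 1)) * h3
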